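/- arXiv:1901.00331 — 2 statements merged into one kernel-verified Lean document; each statement's English description precedes it below -/
import Mathlib

section
/- For every d ≥ 1, every ℓ ≥ 0 and every p ≥ 0 there exists a kernel K : ℝ^d → ℝ of the form K(u) = k(|u|) (a radial kernel) which is infinitely differentiable, nonnegative, integrates to 1, has finite moments μ_K(j) = ∫ |u|^j K(u) du < ∞ for all 0 ≤ j ≤ ℓ, and has the following property: there is a constant c > 0 (depending only on K, d, p) such that for every probability density f₀ on ℝ^d with ∫_{|u|≤1} f₀(u) du < 1 and every invertible real d×d matrix h whose eigenvalues λ₁,…,λ_d (counted with multiplicity, ordered with |λ₁| ≥ … ≥ |λ_d|) are all real, there exists a probability density f on ℝ^d with f(u) = f₀(u) for all |u| ≤ 1 and with K_h ⋆ f(0) ≥ c · |λ₁|^p / ∏_{i=1}^d |λ_i|. -/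
open MeasureTheory Filter

noncomputable def matCLM {d : ℕ} (h : Matrix (Fin d) (Fin d) ℝ) :
    EuclideanSpace ℝ (Fin d) →L[ℝ] EuclideanSpace ℝ (Fin d) :=
  Matrix.toEuclideanCLM (𝕜 := ℝ) h

/-- A probability density on ℝ^d. -/
def IsDensity {d : ℕ} (f : EuclideanSpace ℝ (Fin d) → ℝ) : Prop :=
  (∀ u, 0 ≤ f u) ∧ MeasureTheory.Integrable f ∧ (∫ u, f u) = 1

/-- The KDE convolution `K_h ⋆ f (x') = ∫ |det h|⁻¹ K(h⁻¹(x'-x)) f(x) dx`. -/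
noncomputable def kdeConv {d : ℕ} (K : EuclideanSpace ℝ (Fin d) → ℝ)
    (h : Matrix (Fin d) (Fin d) ℝ) (f : EuclideanSpace ℝ (Fin d) → ℝ)
    (x' : EuclideanSpace ℝ (Fin d)) : ℝ :=
  ∫ x, |h.det|⁻¹ * K (matCLM h⁻¹ (x' - x)) * f x

/-- The j-th absolute moment of a kernel. -/
noncomputable def kMoment {d : ℕ} (K : EuclideanSpace ℝ (Fin d) → ℝ) (j : ℕ) : ℝ :=
  ∫ u, ‖u‖ ^ j * |K u|

/-!
The kernel may be unbounded, and then the mass that `f₀` leaves outside the unit ball can be spent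
where the rescaled kernel is huge: spread over a small set on which `K_h (x' - ·)` exceeds `R / m`,
a missing mass `m` contributes at least `R` to the convolution. Since `x ↦ h⁻¹ (x' - x)` is a
homeomorphism, such sets exist outside every compact set as soon as `K` is unbounded at infinity,
whatever `h` and `R` are; in particular the eigenvalues of `h` enter only through the choice of `R`.

A smooth radial kernel that is unbounded at infinity and has all its moments is
`u ↦ g (‖u‖ ^ 2)`, where `g` equals `t ^ 2` at every natural number `t` but is supported in a
neighbourhood of `ℕ` so thin that the corresponding shells have finite mass under
`exp ‖u‖ * ‖u‖ ^ 4 du`. This neighbourhood comes from outer regularity, because the spheres of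
radius `√n` form a null set.
-/

section IntegrableCutoff

open scoped Manifold

variable {E : Type*} [NormedAddCommGroup E] [NormedSpace ℝ E] [FiniteDimensional ℝ E]
  [MeasurableSpace E] [BorelSpace E]

theorem exists_contDiff_eqOn_integrable_of_measure_eq_zero (ν : Measure E)
    [IsLocallyFiniteMeasure ν] {S : Set E} (hS : IsClosed S) (hνS : ν S = 0) {φ : E → ℝ}
    (hφ : ContDiff ℝ (⊤ : ℕ∞) φ) (hφ0 : 0 ≤ φ) :
    ∃ g : E → ℝ, ContDiff ℝ (⊤ : ℕ∞) g ∧ 0 ≤ g ∧ Set.EqOn g φ S ∧ Integrable g ν := by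
  let ρ : Measure E := ν.withDensity fun x ↦ ENNReal.ofReal (φ x)
  have : IsLocallyFiniteMeasure ρ := IsLocallyFiniteMeasure.withDensity_ofReal hφ.continuous
  have hρS : ρ S < 1 := by
    rw [withDensity_absolutelyContinuous ν _ hνS]
    exact one_pos
  obtain ⟨U, hSU, hU, hρU⟩ := S.exists_isOpen_lt_of_lt 1 hρS
  have hφU : IntegrableOn φ U ν := by
    refine ⟨hφ.continuous.aestronglyMeasurable, ?_⟩
    rw [hasFiniteIntegral_iff_ofReal (.of_forall hφ0), ← withDensity_apply _ hU.measurableSet]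
    exact hρU.trans ENNReal.one_lt_top
  obtain ⟨χ, hχ, hχrange, hχU, hχS⟩ := exists_contMDiff_support_eq_eq_one_iff 𝓘(ℝ, E) hU hS hSU
  have hχ01 (x : E) : χ x ∈ Set.Icc 0 1 := hχrange ⟨x, rfl⟩
  have hg : ContDiff ℝ (⊤ : ℕ∞) fun x ↦ χ x * φ x := hχ.contDiff.mul hφ
  have hg0 (x : E) : 0 ≤ χ x * φ x := mul_nonneg (hχ01 x).1 (hφ0 x)
  have hgφ (x : E) : χ x * φ x ≤ φ x := mul_le_of_le_one_left (hφ0 x) (hχ01 x).2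
  have hgU : Function.support (fun x ↦ χ x * φ x) ⊆ U :=
    (Function.support_mul_subset_left _ _).trans hχU.le
  refine ⟨fun x ↦ χ x * φ x, hg, hg0, fun x hx ↦ ?_, ?_⟩
  · simp [(hχS x).1 hx]
  · rw [← integrableOn_iff_integrable_of_support_subset hgU]
    refine Integrable.mono' hφU hg.continuous.aestronglyMeasurable (.of_forall fun x ↦ ?_)
    rw [Real.norm_of_nonneg (hg0 x)]
    exact hgφ x

end IntegrableCutoff

theorem isFiniteMeasureOnCompacts_map_of_isProperMap {X Y : Type*} [TopologicalSpace X]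
    [MeasurableSpace X] [OpensMeasurableSpace X] [TopologicalSpace Y] [T2Space Y]
    [MeasurableSpace Y] [BorelSpace Y] (μ : Measure X) [IsFiniteMeasureOnCompacts μ] {f : X → Y}
    (hf : IsProperMap f) : IsFiniteMeasureOnCompacts (μ.map f) where
  lt_top_of_isCompact _K hK := by
    rw [Measure.map_apply hf.continuous.measurable hK.measurableSet]
    exact (hf.isCompact_preimage hK).measure_lt_top

theorem integrable_norm_pow_mul_of_integrable_exp_norm_mul {E : Type*} [SeminormedAddCommGroup E]
    [MeasurableSpace E] [OpensMeasurableSpace E] {μ : Measure E} {K : E → ℝ}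
    (hK : AEStronglyMeasurable K μ) (hexp : Integrable (fun u ↦ Real.exp ‖u‖ * K u) μ) (j : ℕ) :
    Integrable (fun u ↦ ‖u‖ ^ j * K u) μ := by
  refine (hexp.const_mul (j.factorial : ℝ)).mono
    ((by fun_prop : Measurable fun u : E ↦ ‖u‖ ^ j).aestronglyMeasurable.mul hK)
    (.of_forall fun u ↦ ?_)
  have hpow : ‖u‖ ^ j ≤ j.factorial * Real.exp ‖u‖ :=
    (div_le_iff₀' (by positivity)).1 (Real.pow_div_factorial_le_exp _ (norm_nonneg u) j)
  calc ‖‖u‖ ^ j * K u‖ = ‖u‖ ^ j * ‖K u‖ := by rw [norm_mul, norm_pow, norm_norm]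
    _ ≤ j.factorial * Real.exp ‖u‖ * ‖K u‖ := by gcongr
    _ = ‖j.factorial * (Real.exp ‖u‖ * K u)‖ := by
      rw [norm_mul, norm_mul, Real.norm_natCast, Real.norm_of_nonneg (Real.exp_nonneg _), mul_assoc]

section RadialProfile

theorem isProperMap_norm_sq {E : Type*} [SeminormedAddCommGroup E] [ProperSpace E] :
    IsProperMap fun u : E ↦ ‖u‖ ^ 2 := by
  refine isProperMap_iff_tendsto_cocompact.2 ⟨by fun_prop, ?_⟩
  exact ((tendsto_pow_atTop two_ne_zero).comp (tendsto_norm_cocompact_atTop (E := E))).mono_right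
    atTop_le_cocompact

variable {E : Type*} [NormedAddCommGroup E] [NormedSpace ℝ E] [Nontrivial E]

theorem frequently_cocompact_norm_of_frequently_atTop {P : ℝ → Prop} (hP : ∃ᶠ r in atTop, P r) :
    ∃ᶠ u in cocompact E, P ‖u‖ := by
  obtain ⟨e, he⟩ := exists_norm_eq E zero_le_one
  have hnorm (r : ℝ) : ‖r • e‖ = |r| := by rw [norm_smul, he, mul_one, Real.norm_eq_abs]
  have htendsto : Tendsto (fun r : ℝ ↦ r • e) atTop (cocompact E) := by
    refine (tendsto_norm_atTop_iff_cobounded.1 ?_).mono_right Metric.cobounded_le_cocompact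
    simpa only [hnorm] using tendsto_abs_atTop_atTop
  refine htendsto.frequently ((hP.and_eventually (eventually_ge_atTop 0)).mono ?_)
  rintro r ⟨hr, hr0⟩
  rwa [hnorm, abs_of_nonneg hr0]

variable [FiniteDimensional ℝ E] [MeasurableSpace E] [BorelSpace E] (μ : Measure E)
  [μ.IsAddHaarMeasure]

theorem addHaar_preimage_norm_sq_of_countable {S : Set ℝ} (hS : S.Countable) :
    μ ((fun u : E ↦ ‖u‖ ^ 2) ⁻¹' S) = 0 := by
  refine measure_mono_null (t := ⋃ t ∈ S, Metric.sphere (0 : E) √t) (fun u hu ↦ ?_)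
    ((measure_biUnion_null_iff hS).2 fun t _ ↦ Measure.addHaar_sphere μ 0 √t)
  exact Set.mem_biUnion hu (by simp [Real.sqrt_sq])

theorem exists_contDiff_eqOn_integrable_mul_comp_norm_sq {w : E → ℝ} (hw : Continuous w)
    (hw0 : 0 ≤ w) {S : Set ℝ} (hS : IsClosed S) (hSc : S.Countable) {φ : ℝ → ℝ}
    (hφ : ContDiff ℝ (⊤ : ℕ∞) φ) (hφ0 : 0 ≤ φ) :
    ∃ g : ℝ → ℝ, ContDiff ℝ (⊤ : ℕ∞) g ∧ 0 ≤ g ∧ Set.EqOn g φ S ∧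
      Integrable (fun u ↦ w u * g (‖u‖ ^ 2)) μ := by
  let ρ : Measure E := μ.withDensity fun u ↦ ENNReal.ofReal (w u)
  have : IsLocallyFiniteMeasure ρ := IsLocallyFiniteMeasure.withDensity_ofReal hw
  let ν : Measure ℝ := ρ.map fun u ↦ ‖u‖ ^ 2
  have : IsFiniteMeasureOnCompacts ν :=
    isFiniteMeasureOnCompacts_map_of_isProperMap ρ isProperMap_norm_sq
  have hνS : ν S = 0 := by
    rw [Measure.map_apply (by fun_prop) hS.measurableSet]
    exact withDensity_absolutelyContinuous μ _ (addHaar_preimage_norm_sq_of_countable μ hSc)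
  obtain ⟨g, hg, hg0, hgS, hgν⟩ :=
    exists_contDiff_eqOn_integrable_of_measure_eq_zero ν hS hνS hφ hφ0
  refine ⟨g, hg, hg0, hgS, ?_⟩
  have hgρ : Integrable (fun u ↦ g (‖u‖ ^ 2)) ρ :=
    (integrable_map_measure hg.continuous.aestronglyMeasurable (by fun_prop)).1 hgν
  rw [integrable_withDensity_iff_integrable_smul' (by fun_prop) (by simp)] at hgρ
  simpa only [ENNReal.toReal_ofReal (hw0 _), smul_eq_mul] using hgρ

end RadialProfile

theorem exists_radial_contDiff_integral_eq_one_unbounded {E : Type*} [NormedAddCommGroup E]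
    [InnerProductSpace ℝ E] [FiniteDimensional ℝ E] [Nontrivial E] [MeasurableSpace E]
    [BorelSpace E] (μ : Measure E) [μ.IsAddHaarMeasure] {w : E → ℝ} (hw : Continuous w)
    (hw1 : 1 ≤ w) :
    ∃ k : ℝ → ℝ, ContDiff ℝ (⊤ : ℕ∞) (fun u : E ↦ k ‖u‖) ∧ 0 ≤ k ∧ ∫ u, k ‖u‖ ∂μ = 1 ∧
      Integrable (fun u ↦ w u * k ‖u‖) μ ∧ ∀ R, ∃ᶠ u in cocompact E, R < k ‖u‖ := by
  obtain ⟨g, hg, hg0, hgS, hwg⟩ := exists_contDiff_eqOn_integrable_mul_comp_norm_sq μ hw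
    (zero_le_one.trans hw1) Nat.isClosedEmbedding_coe_real.isClosed_range (Set.countable_range _)
    (contDiff_id.pow 2) fun t ↦ sq_nonneg t
  have hgn (n : ℕ) : g n = n ^ 2 := hgS ⟨n, rfl⟩
  have hG : ContDiff ℝ (⊤ : ℕ∞) fun u : E ↦ g (‖u‖ ^ 2) := hg.comp (contDiff_norm_sq ℝ)
  have hGint : Integrable (fun u ↦ g (‖u‖ ^ 2)) μ := by
    refine hwg.mono' hG.continuous.aestronglyMeasurable (.of_forall fun u ↦ ?_)
    rw [Real.norm_of_nonneg (hg0 _)]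
    exact le_mul_of_one_le_left (hg0 _) (hw1 u)
  obtain ⟨e, he⟩ := exists_norm_eq E zero_le_one
  let I := ∫ u, g (‖u‖ ^ 2) ∂μ
  have hI : 0 < I := integral_pos_of_integrable_nonneg_nonzero hG.continuous hGint
    (fun u ↦ hg0 _) (x := e) (by simpa [he] using (hgn 1).trans_ne (by simp))
  have hlim : Tendsto (fun n : ℕ ↦ I⁻¹ * g (√n ^ 2)) atTop atTop := by
    simp only [Real.sq_sqrt (Nat.cast_nonneg _), hgn]
    exact ((tendsto_pow_atTop two_ne_zero).comp tendsto_natCast_atTop_atTop).const_mul_atTop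
      (inv_pos.2 hI)
  have hunbdd (R : ℝ) : ∃ᶠ r in atTop, R < I⁻¹ * g (r ^ 2) :=
    (Real.tendsto_sqrt_atTop.comp tendsto_natCast_atTop_atTop).frequently
      (hlim.eventually_gt_atTop R).frequently
  refine ⟨fun r ↦ I⁻¹ * g (r ^ 2), contDiff_const.mul hG,
    fun r ↦ mul_nonneg (inv_nonneg.2 hI.le) (hg0 _), ?_, ?_,
    fun R ↦ frequently_cocompact_norm_of_frequently_atTop (hunbdd R)⟩
  · rw [integral_const_mul, inv_mul_cancel₀ hI.ne']
  · simpa only [mul_left_comm] using hwg.const_mul I⁻¹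

theorem exists_isCompact_subset_measureReal_pos {X : Type*} [TopologicalSpace X] [R1Space X]
    [LocallyCompactSpace X] [MeasurableSpace X] (μ : Measure X) [μ.IsOpenPosMeasure]
    [IsFiniteMeasureOnCompacts μ] {U : Set X} (hU : IsOpen U) (hne : U.Nonempty) :
    ∃ B ⊆ U, IsCompact B ∧ 0 < μ.real B := by
  obtain ⟨B, hBU⟩ := hU.exists_positiveCompacts_closure_subset hne
  exact ⟨B, subset_closure.trans hBU, B.isCompact,
    ENNReal.toReal_pos (Measure.measure_pos_of_nonempty_interior μ B.interior_nonempty).ne'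
      B.isCompact.measure_ne_top⟩

section MassPlacement

variable {X : Type*} [TopologicalSpace X] [MeasurableSpace X] [OpensMeasurableSpace X]

theorem integrable_mul_indicator_of_isCompact [T2Space X] {μ : Measure X} {A : Set X}
    (hA : IsCompact A) {G f : X → ℝ} (hG : Continuous G) (hf : IntegrableOn f A μ) :
    Integrable (fun x ↦ G x * A.indicator f x) μ := by
  simp only [← Set.indicator_mul_right]
  exact (integrable_indicator_iff hA.measurableSet).2 (hf.continuousOn_mul hG.continuousOn hA)

theorem exists_eqOn_integral_eq_le_integral_mul [T2Space X] [LocallyCompactSpace X]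
    (μ : Measure X) [μ.IsOpenPosMeasure] [IsFiniteMeasureOnCompacts μ] {G : X → ℝ}
    (hG : Continuous G) (hG0 : 0 ≤ G) (hGub : ∀ R, ∃ᶠ x in cocompact X, R < G x)
    {A : Set X} (hA : IsCompact A) {f₀ : X → ℝ} (hf₀ : 0 ≤ f₀) (hf₀A : IntegrableOn f₀ A μ)
    {M : ℝ} (hM : ∫ x in A, f₀ x ∂μ < M) (R : ℝ) :
    ∃ f : X → ℝ, 0 ≤ f ∧ Integrable f μ ∧ ∫ x, f x ∂μ = M ∧ Set.EqOn f f₀ A ∧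
      R ≤ ∫ x, G x * f x ∂μ := by
  let m := M - ∫ x in A, f₀ x ∂μ
  have hm : 0 < m := sub_pos.2 hM
  obtain ⟨x₀, hx₀G, hx₀A⟩ := ((hGub (R / m)).and_eventually hA.compl_mem_cocompact).exists
  obtain ⟨B, hBU, hB, hV⟩ := exists_isCompact_subset_measureReal_pos μ
    ((isOpen_lt continuous_const hG).inter hA.isClosed.isOpen_compl) ⟨x₀, hx₀G, hx₀A⟩
  have hint : IntegrableOn (fun _ ↦ m / μ.real B) B μ := integrableOn_const hB.measure_ne_top
  have hspike : ∫ x, B.indicator (fun _ ↦ m / μ.real B) x ∂μ = m := by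
    rw [integral_indicator_const _ hB.measurableSet, smul_eq_mul, mul_div_cancel₀ _ hV.ne']
  have hf₀ind (x : X) : 0 ≤ A.indicator f₀ x := Set.indicator_nonneg (fun x _ ↦ hf₀ x) x
  have hBind (x : X) : 0 ≤ B.indicator (fun _ ↦ m / μ.real B) x :=
    Set.indicator_nonneg (fun _ _ ↦ by positivity) x
  have hi₁ := hf₀A.integrable_indicator hA.measurableSet
  have hi₂ := hint.integrable_indicator hB.measurableSet
  have hGi₁ := integrable_mul_indicator_of_isCompact hA hG hf₀A
  have hGi₂ := integrable_mul_indicator_of_isCompact hB hG hint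
  refine ⟨A.indicator f₀ + B.indicator fun _ ↦ m / μ.real B,
    fun x ↦ add_nonneg (hf₀ind x) (hBind x), hi₁.add hi₂, ?_, fun x hx ↦ ?_, ?_⟩
  · simp only [Pi.add_apply]
    rw [integral_add hi₁ hi₂, hspike, integral_indicator hA.measurableSet, add_sub_cancel]
  · have hxB : x ∉ B := fun hxB ↦ (hBU hxB).2 hx
    simp [hx, hxB]
  · calc R = R / m * ∫ x, B.indicator (fun _ ↦ m / μ.real B) x ∂μ := by
          rw [hspike, div_mul_cancel₀ _ hm.ne']
      _ = ∫ x, R / m * B.indicator (fun _ ↦ m / μ.real B) x ∂μ := (integral_const_mul _ _).symm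
      _ ≤ ∫ x, G x * B.indicator (fun _ ↦ m / μ.real B) x ∂μ := by
          refine integral_mono (hi₂.const_mul _) hGi₂ fun x ↦ ?_
          by_cases hx : x ∈ B
          · exact mul_le_mul_of_nonneg_right (hBU hx).1.le (hBind x)
          · simp [hx]
      _ ≤ ∫ x, G x * (A.indicator f₀ + B.indicator fun _ ↦ m / μ.real B) x ∂μ := by
          simp only [Pi.add_apply, mul_add]
          rw [integral_add hGi₁ hGi₂]
          exact le_add_of_nonneg_left
            (integral_nonneg fun x ↦ mul_nonneg (hG0 x) (hf₀ind x))

end MassPlacement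

section RescaledKernel

variable {d : ℕ} {h : Matrix (Fin d) (Fin d) ℝ}

theorem matCLM_nonsing_inv_apply_matCLM (hh : IsUnit h.det) (u : EuclideanSpace ℝ (Fin d)) :
    matCLM h⁻¹ (matCLM h u) = u := by
  have hmul : matCLM h⁻¹ * matCLM h = 1 := by
    simp only [matCLM, ← map_mul, Matrix.nonsing_inv_mul h hh, map_one]
  exact DFunLike.congr_fun hmul u

theorem tendsto_sub_matCLM_cocompact (hh : IsUnit h.det) (x' : EuclideanSpace ℝ (Fin d)) :
    Tendsto (fun u ↦ x' - matCLM h u) (cocompact _) (cocompact _) := by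
  have hinj : Function.Injective (matCLM h) :=
    Function.LeftInverse.injective (matCLM_nonsing_inv_apply_matCLM hh)
  exact (Homeomorph.subLeft x').isClosedEmbedding.tendsto_cocompact.comp
    (LinearMap.isClosedEmbedding_of_injective (f := (matCLM h).toLinearMap)
      (LinearMap.ker_eq_bot.2 hinj)).tendsto_cocompact

theorem frequently_cocompact_lt_rescaled_kernel {K : EuclideanSpace ℝ (Fin d) → ℝ}
    (hK : ∀ R, ∃ᶠ u in cocompact _, R < K u) (hh : IsUnit h.det)
    (x' : EuclideanSpace ℝ (Fin d)) (R : ℝ) :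
    ∃ᶠ x in cocompact _, R < |h.det|⁻¹ * K (matCLM h⁻¹ (x' - x)) := by
  refine (tendsto_sub_matCLM_cocompact hh x').frequently ((hK (R * |h.det|)).mono fun u hu ↦ ?_)
  rwa [sub_sub_cancel, matCLM_nonsing_inv_apply_matCLM hh, inv_mul_eq_div,
    lt_div_iff₀ (abs_pos.2 hh.ne_zero)]

theorem exists_isDensity_eqOn_le_kdeConv {K : EuclideanSpace ℝ (Fin d) → ℝ} (hK : Continuous K)
    (hK0 : 0 ≤ K) (hKub : ∀ R, ∃ᶠ u in cocompact _, R < K u) (hh : IsUnit h.det)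
    {A : Set (EuclideanSpace ℝ (Fin d))} (hA : IsCompact A) {f₀ : EuclideanSpace ℝ (Fin d) → ℝ}
    (hf₀ : 0 ≤ f₀) (hf₀A : IntegrableOn f₀ A) (hlt : ∫ u in A, f₀ u < 1)
    (x' : EuclideanSpace ℝ (Fin d)) (R : ℝ) :
    ∃ f, IsDensity f ∧ Set.EqOn f f₀ A ∧ R ≤ kdeConv K h f x' := by
  obtain ⟨f, hf0, hf, hf1, hfA, hR⟩ := exists_eqOn_integral_eq_le_integral_mul volume
    (G := fun x ↦ |h.det|⁻¹ * K (matCLM h⁻¹ (x' - x))) (by fun_prop)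
    (fun x ↦ mul_nonneg (inv_nonneg.2 (abs_nonneg _)) (hK0 _))
    (frequently_cocompact_lt_rescaled_kernel hKub hh x') hA hf₀ hf₀A hlt R
  exact ⟨f, ⟨hf0, hf, hf1⟩, hfA, hR⟩

end RescaledKernel

theorem kde_lower_bound_kernel_exists_general (d : ℕ) (hd : 1 ≤ d) :
    ∃ (k : ℝ → ℝ) (K : EuclideanSpace ℝ (Fin d) → ℝ),
      (∀ u, K u = k ‖u‖) ∧
      ContDiff ℝ (⊤ : ℕ∞) K ∧
      (∀ u, 0 ≤ K u) ∧
      (∫ u, K u) = 1 ∧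
      (∀ j : ℕ, Integrable fun u : EuclideanSpace ℝ (Fin d) ↦ ‖u‖ ^ j * K u) ∧
      ∀ A : Set (EuclideanSpace ℝ (Fin d)), IsCompact A →
        ∀ f₀ : EuclideanSpace ℝ (Fin d) → ℝ, IsDensity f₀ → (∫ u in A, f₀ u) < 1 →
          ∀ h : Matrix (Fin d) (Fin d) ℝ, IsUnit h.det →
            ∀ (x' : EuclideanSpace ℝ (Fin d)) (R : ℝ),
              ∃ f : EuclideanSpace ℝ (Fin d) → ℝ,
                IsDensity f ∧ Set.EqOn f f₀ A ∧ R ≤ kdeConv K h f x' := by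
  have : NeZero d := ⟨Nat.one_le_iff_ne_zero.1 hd⟩
  obtain ⟨k, hk, hk0, hk1, hexp, hkub⟩ := exists_radial_contDiff_integral_eq_one_unbounded volume
    (w := fun u : EuclideanSpace ℝ (Fin d) ↦ Real.exp ‖u‖) (by fun_prop)
    fun u ↦ Real.one_le_exp (norm_nonneg u)
  have hmoment := integrable_norm_pow_mul_of_integrable_exp_norm_mul
    hk.continuous.aestronglyMeasurable hexp
  refine ⟨k, fun u ↦ k ‖u‖, fun _ ↦ rfl, hk, fun u ↦ hk0 _, hk1, hmoment, ?_⟩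
  intro A hA f₀ hf₀ hlt h hh x' R
  exact exists_isDensity_eqOn_le_kdeConv hk.continuous (fun u ↦ hk0 _) hkub hh hA hf₀.1
    hf₀.2.1.integrableOn hlt x' R

/-- existence of a smooth nonnegative radial kernel with ℓ finite moments
whose KDE estimate at 0, over densities with prescribed behavior on the unit ball,
can be forced to be at least `c · |λ₁|^p / ∏ |λᵢ|`. -/
theorem kde_lower_bound_kernel_exists (d : ℕ) (hd : 1 ≤ d) (ℓ : ℕ) (p : ℝ) (hp : 0 ≤ p) :
    ∃ (k : ℝ → ℝ) (K : EuclideanSpace ℝ (Fin d) → ℝ),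
      (∀ u, K u = k ‖u‖) ∧
      ContDiff ℝ (⊤ : ℕ∞) K ∧
      (∀ u, 0 ≤ K u) ∧
      (∫ u, K u) = 1 ∧
      (∀ j : ℕ, j ≤ ℓ → MeasureTheory.Integrable
        fun u : EuclideanSpace ℝ (Fin d) => ‖u‖ ^ j * K u) ∧
      ∃ c : ℝ, 0 < c ∧
        ∀ f₀ : EuclideanSpace ℝ (Fin d) → ℝ, IsDensity f₀ →
          (∫ u in Metric.closedBall (0 : EuclideanSpace ℝ (Fin d)) 1, f₀ u) < 1 →
          ∀ (h : Matrix (Fin d) (Fin d) ℝ) (lam : Fin d → ℝ),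
            IsUnit h.det →
            h.charpoly = ∏ i : Fin d, (Polynomial.X - Polynomial.C (lam i)) →
            (∀ i j : Fin d, i ≤ j → |lam j| ≤ |lam i|) →
            ∃ f : EuclideanSpace ℝ (Fin d) → ℝ, IsDensity f ∧
              (∀ u, ‖u‖ ≤ 1 → f u = f₀ u) ∧
              c * |lam ⟨0, hd⟩| ^ p / (∏ i, |lam i|) ≤ kdeConv K h f 0 := by
  obtain ⟨k, K, hKk, hK, hK0, hK1, hmoment, hbound⟩ := kde_lower_bound_kernel_exists_general d hd
  refine ⟨k, K, hKk, hK, hK0, hK1, fun j _ ↦ hmoment j, 1, one_pos, ?_⟩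
  intro f₀ hf₀ hlt h lam hh _ _
  simpa [Set.EqOn] using hbound _ (isCompact_closedBall 0 1) f₀ hf₀ hlt h hh 0 _
end

section
/- Fix integers d ≥ 1, ℓ ≥ 0 and a real p ≥ 0, let Ψ(r) = exp(−1/(1 − r²)) · 1_{(−1,1)}(r) be the standard bump function, and define k : ℝ → ℝ by k(r) = Σ_{n ∈ ℤ, |n| ≥ 2} |n|^{-p} · Ψ( 2 |n|^{p+ℓ+d+1} (r − n) ). Then k is well-defined (at every point at most one summand is nonzero), nonnegative, and infinitely differentiable on ℝ. -/
open Filter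

/-- The standard bump function `Ψ(r) = exp(−1/(1−r²))·1_{(−1,1)}(r)`. -/
noncomputable def stdBump (r : ℝ) : ℝ :=
  if r ∈ Set.Ioo (-1 : ℝ) 1 then Real.exp (-1 / (1 - r ^ 2)) else 0

/-- The spiky radial profile `k(r) = Σ_{|n|≥2} |n|^{-p} Ψ(2|n|^{p+ℓ+d+1}(r−n))`. -/
noncomputable def spikyProfile (d ℓ : ℕ) (p : ℝ) (r : ℝ) : ℝ :=
  ∑' n : {n : ℤ // 2 ≤ |n|},
    |((n : ℤ) : ℝ)| ^ (-p) *
      stdBump (2 * |((n : ℤ) : ℝ)| ^ (p + ℓ + d + 1) * (r - ((n : ℤ) : ℝ)))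

/-! The `n`-th summand is supported in the ball of radius `(1 / 2) |n|^{-q}`, `q = p + ℓ + d + 1`,
around `n`. Since `0 ≤ q`, this radius is at most `1 / 2`, so the supports are pairwise disjoint and
locally finite, and near each point the series is a finite sum of smooth functions. -/

open Function Metric

theorem contDiff_tsum_of_locallyFinite {𝕜 ι E F : Type*} [NontriviallyNormedField 𝕜]
    [NormedAddCommGroup E] [NormedSpace 𝕜 E] [NormedAddCommGroup F] [NormedSpace 𝕜 F]
    {n : WithTop ℕ∞} {f : ι → E → F} (hf : ∀ i, ContDiff 𝕜 n (f i))
    (hfin : LocallyFinite fun i ↦ support (f i)) : ContDiff 𝕜 n fun x ↦ ∑' i, f i x := by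
  have tsum_eq (x : E) : ∑' i, f i x = ∑ᶠ i, f i x := tsum_eq_finsum (hfin.point_finite x)
  simp only [tsum_eq, ← contMDiff_iff_contDiff] at hf ⊢
  exact contMDiff_finsum hf hfin

theorem locallyFinite_ball_of_tendsto_cobounded {ι X : Type*} [PseudoMetricSpace X] {c : ι → X}
    (hc : Tendsto c cofinite (Bornology.cobounded X)) (ε : ℝ) :
    LocallyFinite fun i ↦ ball (c i) ε := by
  intro x
  have finite_centers : {i | c i ∈ ball x (ε + 1)}.Finite := by
    simpa using hc.eventually (Bornology.isBounded_def.1 isBounded_ball)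
  refine ⟨ball x 1, ball_mem_nhds x one_pos, finite_centers.subset ?_⟩
  rintro i ⟨y, hyi, hyx⟩
  exact (dist_triangle_left (c i) x y).trans_lt (add_lt_add hyi hyx)

theorem locallyFinite_ball_intCast (ε : ℝ) : LocallyFinite fun n : ℤ ↦ ball (n : ℝ) ε :=
  locallyFinite_ball_of_tendsto_cobounded
    (cobounded_eq_cocompact (α := ℝ) ▸ Int.tendsto_coe_cofinite) ε

theorem pairwise_disjoint_ball_intCast :
    Pairwise (Disjoint on fun n : ℤ ↦ ball (n : ℝ) (1 / 2)) := by
  intro m n hmn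
  apply ball_disjoint_ball
  simpa only [add_halves, Int.dist_cast_real] using Int.pairwise_one_le_dist hmn

theorem stdBump_eq_expNegInvGlue (r : ℝ) : stdBump r = expNegInvGlue (1 - r ^ 2) := by
  have mem_Ioo_iff : r ∈ Set.Ioo (-1 : ℝ) 1 ↔ ¬1 - r ^ 2 ≤ 0 := by
    rw [Set.mem_Ioo, ← abs_lt, ← sq_lt_one_iff_abs_lt_one, not_le, sub_pos]
  simp only [stdBump, expNegInvGlue, mem_Ioo_iff, ite_not, neg_div, one_div]

theorem stdBump_nonneg (r : ℝ) : 0 ≤ stdBump r := by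
  rw [stdBump_eq_expNegInvGlue]
  exact expNegInvGlue.nonneg _

theorem contDiff_stdBump {n : ℕ∞} : ContDiff ℝ n stdBump := by
  rw [funext stdBump_eq_expNegInvGlue]
  exact expNegInvGlue.contDiff.comp (by fun_prop)

theorem support_stdBump : support stdBump = ball 0 1 := by
  ext r
  simp [stdBump, Real.ball_eq_Ioo]

theorem support_stdBump_mul_sub {b : ℝ} (hb : 0 < b) (c : ℝ) :
    (support fun r ↦ stdBump (b * (r - c))) = ball c b⁻¹ := by
  ext r
  have mem_support_iff : stdBump (b * (r - c)) ≠ 0 ↔ b * (r - c) ∈ ball 0 1 := by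
    rw [← support_stdBump, mem_support]
  rw [mem_support, mem_support_iff, mem_ball_zero_iff, Real.norm_eq_abs, abs_mul, abs_of_pos hb,
    mem_ball, Real.dist_eq, ← one_div, lt_div_iff₀' hb]

/-- The summand `|n|^{-p} Ψ(2|n|^q(r − n))` of the spiky profile, with its two exponents taken as
independent parameters; `spikyProfile` is the case `q = p + ℓ + d + 1`. -/
noncomputable def spike (p q : ℝ) (n : ℤ) (r : ℝ) : ℝ :=
  |(n : ℝ)| ^ (-p) * stdBump (2 * |(n : ℝ)| ^ q * (r - n))

theorem spike_nonneg (p q : ℝ) (n : ℤ) (r : ℝ) : 0 ≤ spike p q n r :=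
  mul_nonneg (by positivity) (stdBump_nonneg _)

theorem contDiff_spike (p q : ℝ) (n : ℤ) {k : ℕ∞} : ContDiff ℝ k (spike p q n) :=
  contDiff_const.mul (contDiff_stdBump.comp (by fun_prop))

theorem support_spike_subset_ball (p : ℝ) {q : ℝ} (hq : 0 ≤ q) {n : ℤ} (hn : n ≠ 0) :
    support (spike p q n) ⊆ ball (n : ℝ) (1 / 2) := by
  have one_le_abs : 1 ≤ |(n : ℝ)| := mod_cast Int.one_le_abs hn
  have one_le_rpow : 1 ≤ |(n : ℝ)| ^ q := Real.one_le_rpow one_le_abs hq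
  calc support (spike p q n)
      ⊆ support fun r ↦ stdBump (2 * |(n : ℝ)| ^ q * (r - n)) := support_mul_subset_right _ _
    _ = ball (n : ℝ) (2 * |(n : ℝ)| ^ q)⁻¹ := support_stdBump_mul_sub (by positivity) _
    _ ⊆ ball (n : ℝ) (1 / 2) := ball_subset_ball (by
      rw [one_div]
      gcongr
      linarith)

theorem subsingleton_setOf_spike_ne_zero (p : ℝ) {q : ℝ} (hq : 0 ≤ q) (r : ℝ) :
    {n : ℤ | n ≠ 0 ∧ spike p q n r ≠ 0}.Subsingleton :=
  (subsingleton_setOfPred_mem_iff_pairwise_disjoint.2 pairwise_disjoint_ball_intCast r).anti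
    fun _ ⟨hn, hr⟩ ↦ support_spike_subset_ball p hq hn hr

theorem contDiff_tsum_spike (p : ℝ) {q : ℝ} (hq : 0 ≤ q) {s : Set ℤ} (hs : 0 ∉ s) {k : ℕ∞} :
    ContDiff ℝ k fun r ↦ ∑' n : s, spike p q n r := by
  refine contDiff_tsum_of_locallyFinite (fun n ↦ contDiff_spike p q n) ?_
  refine ((locallyFinite_ball_intCast (1 / 2)).comp_injective
    Subtype.val_injective).subset fun n ↦ ?_
  exact support_spike_subset_ball p hq (ne_of_mem_of_not_mem n.2 hs)

theorem spikyProfile_wellDefined_nonneg_smooth_general (d ℓ : ℕ) (p : ℝ)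
    (hq : 0 ≤ p + ℓ + d + 1) :
    (∀ r : ℝ, Set.Subsingleton {n : ℤ | 2 ≤ |n| ∧
        |(n : ℝ)| ^ (-p) *
          stdBump (2 * |(n : ℝ)| ^ (p + ℓ + d + 1) * (r - (n : ℝ))) ≠ 0}) ∧
    (∀ r : ℝ, 0 ≤ spikyProfile d ℓ p r) ∧
    ContDiff ℝ (⊤ : ℕ∞) (spikyProfile d ℓ p) := by
  have ne_zero {n : ℤ} (hn : 2 ≤ |n|) : n ≠ 0 := abs_pos.1 (two_pos.trans_le hn)
  refine ⟨fun r ↦ ?_, fun r ↦ tsum_nonneg fun n ↦ spike_nonneg p _ n r, ?_⟩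
  · exact (subsingleton_setOf_spike_ne_zero p hq r).anti fun n ⟨hn, hr⟩ ↦ ⟨ne_zero hn, hr⟩
  · exact contDiff_tsum_spike p hq (s := {n | 2 ≤ |n|}) fun h ↦ ne_zero h rfl

/-- the spiky profile is well-defined (at every point at most one
summand is nonzero), nonnegative and infinitely differentiable. -/
theorem spikyProfile_wellDefined_nonneg_smooth (d ℓ : ℕ) (hd : 1 ≤ d)
    (p : ℝ) (hp : 0 ≤ p) :
    (∀ r : ℝ, Set.Subsingleton {n : ℤ | 2 ≤ |n| ∧
        |(n : ℝ)| ^ (-p) *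
          stdBump (2 * |(n : ℝ)| ^ (p + ℓ + d + 1) * (r - (n : ℝ))) ≠ 0}) ∧
    (∀ r : ℝ, 0 ≤ spikyProfile d ℓ p r) ∧
    ContDiff ℝ (⊤ : ℕ∞) (spikyProfile d ℓ p) :=
  spikyProfile_wellDefined_nonneg_smooth_general d ℓ p (by positivity)
end
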